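/- Let α>0, 0<r<1, 1≤p≤∞, and define 𝒫_{α,r,n}(t) = Σ_{k=0}^∞ e^{-α(k+n)^r} e^{ikt}. Then for every t with 0 < |t| ≤ π: (i) |𝒫_{α,r,n}(t)| ≤ (π/|t|) e^{-α n^r} for all n∈ℕ; and (ii) for every integer n ≥ n₂(α,r,p), |𝒫'_{α,r,n}(t)| ≤ (28π/(13|t|)) e^{-α n^r} n^{1-r}/(αr). -/

import Mathlib

open MeasureTheory Real Filter
open scoped ENNReal

/-- `n₂(α,r,p)`: the smallest positive integer `n` with
`(1/(αr)) n^{-r} + αr χ(p) n^{-(1-r)} ≤ 1/14`, where `χ(p)=p` for finite `p` and `χ(∞)=1`. -/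
noncomputable def n₂ (α r : ℝ) (p : ℝ≥0∞) : ℕ :=
  sInf {n : ℕ | 0 < n ∧
    1 / (α * r) * (n : ℝ) ^ (-r) +
      α * r * (if p = ∞ then 1 else p.toReal) * (n : ℝ) ^ (-(1 - r)) ≤ 1 / 14}


/-- `𝒫_{α,r,n}(t) = Σ_{k=0}^∞ e^{-α(k+n)^r} e^{ikt}`. -/
noncomputable def Pn (α r : ℝ) (n : ℕ) (t : ℝ) : ℂ :=
  ∑' k : ℕ, (Real.exp (-α * ((k + n : ℕ) : ℝ) ^ r) : ℂ) *
    Complex.exp (Complex.I * (k : ℂ) * (t : ℂ))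

lemma aux_abel (b : ℕ → ℝ) (z : ℂ) (N : ℕ) :
    (1 - z) * ∑ k ∈ Finset.range N, (b k : ℂ) * z ^ k =
      b 0 - b N * z ^ N + ∑ k ∈ Finset.range N, ((b (k+1) - b k : ℝ) : ℂ) * z ^ (k+1) := by
  induction N with
  | zero => simp
  | succ N ih =>
    rw [Finset.sum_range_succ, mul_add, ih, Finset.sum_range_succ]
    push_cast
    ring

lemma aux_abel_norm (b : ℕ → ℝ) (z : ℂ) (hz : ‖z‖ = 1) (N : ℕ) :
    ‖1 - z‖ * ‖∑ k ∈ Finset.range N, (b k : ℂ) * z ^ k‖ ≤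
      |b 0| + |b N| + ∑ k ∈ Finset.range N, |b (k+1) - b k| := by
  rw [← norm_mul, aux_abel]
  refine (norm_add_le _ _).trans (add_le_add ((norm_sub_le _ _).trans ?_) ?_)
  · simp [hz]
  · refine (norm_sum_le _ _).trans (Finset.sum_le_sum fun k _ => ?_)
    rw [norm_mul, norm_pow, hz, Complex.norm_real]
    simp

lemma aux_one_sub (t : ℝ) (h : |t| ≤ π) :
    2 * |t| / π ≤ ‖1 - Complex.exp (Complex.I * t)‖ := by
  rw [norm_sub_rev, Complex.norm_exp_I_mul_ofReal_sub_one]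
  have := Real.mul_abs_le_abs_sin (x := t / 2) (by rw [abs_div, abs_two]; linarith)
  rw [abs_div, abs_two] at this
  rw [norm_mul, Real.norm_eq_abs, Real.norm_eq_abs, abs_two]
  calc _ = 2 * (2 / π * (|t| / 2)) := by ring
    _ ≤ _ := by linarith

lemma aux_bound (b : ℕ → ℝ) (t M : ℝ) (h0 : 0 < |t|) (h : |t| ≤ π)
    (hM : ∀ N, |b 0| + |b N| + ∑ k ∈ Finset.range N, |b (k+1) - b k| ≤ 2 * M) 
    (hs : Summable fun k : ℕ => (b k : ℂ) * Complex.exp (Complex.I * t) ^ k) :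
    ‖∑' k : ℕ, (b k : ℂ) * Complex.exp (Complex.I * t) ^ k‖ ≤ π / |t| * M := by
  refine le_of_tendsto hs.hasSum.tendsto_sum_nat.norm (Eventually.of_forall fun N => ?_)
  have h1 := (aux_abel_norm b (Complex.exp (Complex.I * t))
    (by rw [mul_comm]; exact Complex.norm_exp_ofReal_mul_I t) N).trans (hM N)
  have h2 := mul_le_mul_of_nonneg_right (aux_one_sub t h)
    (norm_nonneg (∑ k ∈ Finset.range N, (b k : ℂ) * Complex.exp (Complex.I * t) ^ k))
  have h3 := h2.trans h1
  have hp := Real.pi_pos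
  rw [div_mul_eq_mul_div, le_div_iff₀ h0]
  rw [div_mul_eq_mul_div, div_le_iff₀ hp] at h3
  linarith

lemma aux_summable (α r : ℝ) (hα : 0 < α) (hr0 : 0 < r) :
    Summable fun m : ℕ => (m : ℝ) * Real.exp (-α * (m : ℝ) ^ r) := by
  have h1 := (isLittleO_exp_neg_mul_rpow_atTop hα (-3 / r)).comp_tendsto
    ((tendsto_rpow_atTop hr0).comp tendsto_natCast_atTop_atTop)
  have h2 := (Asymptotics.isBigO_refl (fun m : ℕ => (m : ℝ)) atTop).mul h1.isBigO
  refine summable_of_isBigO_nat (g := fun m : ℕ => (m : ℝ) ^ (-2 : ℝ)) 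
    (Real.summable_nat_rpow.2 (by norm_num)) (h2.congr' (by rfl) ?_)
  filter_upwards [eventually_gt_atTop 0] with m hm
  have hm' : (0 : ℝ) < m := by exact_mod_cast hm
  simp only [Function.comp]
  rw [← Real.rpow_mul hm'.le, mul_div_cancel₀ _ hr0.ne']
  nth_rewrite 1 [← Real.rpow_one (m : ℝ)]
  rw [← Real.rpow_add hm']
  norm_num

lemma aux_anti (α r : ℝ) (hα : 0 < α) (hr0 : 0 < r) {x y : ℝ} (hx : 0 ≤ x) (hxy : x ≤ y) :
    Real.exp (-α * y ^ r) ≤ Real.exp (-α * x ^ r) := by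
  have := Real.rpow_le_rpow hx hxy hr0.le
  apply Real.exp_le_exp.2
  nlinarith

lemma aux_summable' (α r : ℝ) (hα : 0 < α) (hr0 : 0 < r) (n : ℕ) :
    Summable fun k : ℕ => (k : ℝ) * Real.exp (-α * ((k + n : ℕ) : ℝ) ^ r) := by
  refine Summable.of_nonneg_of_le (fun k => by positivity) (fun k => ?_)
    ((summable_nat_add_iff n).2 (aux_summable α r hα hr0))
  gcongr
  omega

lemma aux_summable'' (α r : ℝ) (hα : 0 < α) (hr0 : 0 < r) (n : ℕ) :
    Summable fun k : ℕ => Real.exp (-α * ((k + n : ℕ) : ℝ) ^ r) := by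
  rw [← summable_nat_add_iff 1]
  refine Summable.of_nonneg_of_le (fun k => by positivity) (fun k => ?_)
    ((summable_nat_add_iff 1).2 (aux_summable' α r hα hr0 n))
  refine le_mul_of_one_le_left (by positivity) ?_
  push_cast
  linarith [(Nat.cast_nonneg k : (0:ℝ) ≤ k)]

lemma aux_exp (t : ℝ) (k : ℕ) : Complex.exp (Complex.I * (k : ℂ) * (t : ℂ)) =
    Complex.exp (Complex.I * t) ^ k := by
  rw [← Complex.exp_nat_mul]; ring_nf

/-- telescoping majorant -/
lemma aux_step (α r : ℝ) (hα : 0 < α) (hr0 : 0 < r) (hr1 : r < 1) (x : ℝ) (hx : 0 < x)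
    (hc : 1 / (α * r) * x ^ (-r) ≤ 1 / 14) :
    13 / 14 * Real.exp (-α * (x + 1) ^ r) ≤
      Real.exp (-α * x ^ r) * x ^ (1 - r) / (α * r) -
      Real.exp (-α * (x + 1) ^ r) * (x + 1) ^ (1 - r) / (α * r) := by
  have hd : ∀ y : ℝ, 0 < y → HasDerivAt
      (fun y : ℝ => Real.exp (-α * y ^ r) * y ^ (1 - r) / (α * r))
      (- Real.exp (-α * y ^ r) * (1 - (1 - r) * (1 / (α * r) * y ^ (-r)))) y := by
    intro y hy
    have h1 := (((Real.hasDerivAt_rpow_const (x := y) (p := r) (Or.inl hy.ne')).const_mul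
      (-α)).exp.mul (Real.hasDerivAt_rpow_const (x := y) (p := 1 - r) (Or.inl hy.ne'))).div_const
      (α * r)
    refine h1.congr_deriv ?_
    have e1 : y ^ (1 - r - 1) = y ^ (-r) := by congr 1; ring
    have e2 : y ^ (r - 1) * y ^ (1 - r) = 1 := by
      rw [← Real.rpow_add hy]; simp
    rw [e1]
    field_simp
    linear_combination (- α * r) * e2
  obtain ⟨c, hc1, hc2⟩ := exists_hasDerivAt_eq_slope
    (fun y : ℝ => Real.exp (-α * y ^ r) * y ^ (1 - r) / (α * r)) _ (show x < x + 1 by linarith)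
    (fun y hy => (hd y (hx.trans_le hy.1)).continuousAt.continuousWithinAt)
    (fun y hy => hd y (hx.trans hy.1))
  have hc0 : 0 < c := hx.trans hc1.1
  have h2 : c ^ (-r) ≤ x ^ (-r) :=
    Real.rpow_le_rpow_of_nonpos hx hc1.1.le (by linarith)
  have h3 : 1 / (α * r) * c ^ (-r) ≤ 1 / 14 := le_trans (by gcongr) hc
  have h4 : 0 ≤ 1 / (α * r) * c ^ (-r) := by positivity
  have h5 : (1 - r) * (1 / (α * r) * c ^ (-r)) ≤ 1 / 14 := by nlinarith
  have h6 := aux_anti α r hα hr0 hc0.le hc1.2.le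
  have h7 := Real.exp_pos (-α * (x + 1) ^ r)
  have h8 : Real.exp (-α * (x + 1) ^ r) * (13/14) ≤
     Real.exp (-α * c ^ r) * (1 - (1 - r) * (1 / (α * r) * c ^ (-r))) :=
    mul_le_mul h6 (by linarith) (by norm_num) (by positivity)
  simp only [add_sub_cancel_left, div_one] at hc2
  linarith

lemma aux_cond (α r : ℝ) (p : ℝ≥0∞) (hα : 0 < α) (hr0 : 0 < r) (hr1 : r < 1)
    (n : ℕ) (hn : n₂ α r p ≤ n) : 0 < n ∧ 1 / (α * r) * (n : ℝ) ^ (-r) ≤ 1 / 14 := by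
  have hne : {n : ℕ | 0 < n ∧
    1 / (α * r) * (n : ℝ) ^ (-r) +
      α * r * (if p = ∞ then 1 else p.toReal) * (n : ℝ) ^ (-(1 - r)) ≤ 1 / 14}.Nonempty := by
    have h1 := ((tendsto_rpow_neg_atTop hr0).comp
      (tendsto_natCast_atTop_atTop (R := ℝ))).const_mul (1 / (α * r))
    have h2 := ((tendsto_rpow_neg_atTop (sub_pos.2 hr1)).comp
      (tendsto_natCast_atTop_atTop (R := ℝ))).const_mul 
        (α * r * (if p = ∞ then 1 else p.toReal))
    have h3 := h1.add h2
    have h4 := h3.eventually (ge_mem_nhds (show _ < (1 / 14 : ℝ) by simp))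
    obtain ⟨m, hm, hm0⟩ := (h4.and (eventually_gt_atTop 0)).exists
    exact ⟨m, hm0, hm⟩
  obtain ⟨h1, h2⟩ := Nat.sInf_mem hne
  change 0 < n₂ α r p at h1
  change 1 / (α * r) * (n₂ α r p : ℝ) ^ (-r) +
      α * r * (if p = ∞ then 1 else p.toReal) * (n₂ α r p : ℝ) ^ (-(1 - r)) ≤ 1 / 14 at h2
  refine ⟨h1.trans_le hn, ?_⟩
  have h3 : 0 ≤ α * r * (if p = ∞ then 1 else p.toReal) * (n₂ α r p : ℝ) ^ (-(1 - r)) := by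
    have : (0:ℝ) ≤ if p = ∞ then 1 else p.toReal := by split_ifs <;> simp
    positivity
  have h4 : (n : ℝ) ^ (-r) ≤ (n₂ α r p : ℝ) ^ (-r) :=
    Real.rpow_le_rpow_of_nonpos (by exact_mod_cast h1) (by exact_mod_cast hn) (by linarith)
  have h5 : 1 / (α * r) * (n : ℝ) ^ (-r) ≤ 1 / (α * r) * (n₂ α r p : ℝ) ^ (-r) := by gcongr
  linarith

lemma aux_sum (α r : ℝ) (hα : 0 < α) (hr0 : 0 < r) (hr1 : r < 1) (n : ℕ) (hn : 0 < n)
    (hc : 1 / (α * r) * (n : ℝ) ^ (-r) ≤ 1 / 14) (N : ℕ) :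
    13 / 14 * ∑ k ∈ Finset.range N, Real.exp (-α * ((k + 1 + n : ℕ) : ℝ) ^ r) ≤
      Real.exp (-α * (n : ℝ) ^ r) * (n : ℝ) ^ (1 - r) / (α * r) -
      Real.exp (-α * ((N + n : ℕ) : ℝ) ^ r) * ((N + n : ℕ) : ℝ) ^ (1 - r) / (α * r) := by
  have hn' : (0 : ℝ) < n := by exact_mod_cast hn
  induction N with
  | zero => simp
  | succ N ih =>
    rw [Finset.sum_range_succ, mul_add]
    have hle : (n : ℝ) ≤ ((N + n : ℕ) : ℝ) := by exact_mod_cast Nat.le_add_left _ _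
    have h4 := Real.rpow_le_rpow_of_nonpos hn' hle (show -r ≤ 0 by linarith)
    have h5 : 1 / (α * r) * ((N + n : ℕ) : ℝ) ^ (-r) ≤ 1 / 14 := le_trans (by gcongr) hc
    have h6 := aux_step α r hα hr0 hr1 ((N + n : ℕ) : ℝ) (hn'.trans_le hle) h5
    have e : ((N + n : ℕ) : ℝ) + 1 = ((N + 1 + n : ℕ) : ℝ) := by push_cast; ring
    rw [e] at h6
    linarith

lemma aux_deriv (α r : ℝ) (hα : 0 < α) (hr0 : 0 < r) (n : ℕ) (t : ℝ) :
    HasDerivAt (Pn α r n) (∑' k : ℕ, Complex.I * (((k : ℝ) * Real.exp (-α * ((k + n : ℕ) : ℝ) ^ r) : ℝ) *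
      Complex.exp (Complex.I * t) ^ k)) t := by
  have hexp : ∀ (k : ℕ) (y : ℝ), ‖Complex.exp (Complex.I * y) ^ k‖ = 1 := fun k y => by
    rw [norm_pow, mul_comm, Complex.norm_exp_ofReal_mul_I, one_pow]
  refine hasDerivAt_tsum (u := fun k : ℕ => (k : ℝ) * Real.exp (-α * ((k + n : ℕ) : ℝ) ^ r))
    (g := fun (k : ℕ) (t : ℝ) => (Real.exp (-α * ((k + n : ℕ) : ℝ) ^ r) : ℂ) *
    Complex.exp (Complex.I * (k : ℂ) * (t : ℂ)))
    (g' := fun (k : ℕ) (t : ℝ) => Complex.I * (((k : ℝ) * Real.exp (-α * ((k + n : ℕ) : ℝ) ^ r) : ℝ) *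
      Complex.exp (Complex.I * t) ^ k))
    (aux_summable' α r hα hr0 n) (fun k y => ?_) (fun k y => ?_) (y₀ := 0) ?_ t
  · have h1 : HasDerivAt (fun y : ℝ => Complex.I * (k : ℂ) * (y : ℂ)) (Complex.I * k * 1) y :=
      (Complex.ofRealCLM.hasDerivAt (x := y)).const_mul _
    have h2 := h1.cexp.const_mul (Real.exp (-α * ((k + n : ℕ) : ℝ) ^ r) : ℂ)
    refine h2.congr_deriv ?_
    rw [aux_exp, Complex.ofReal_mul, Complex.ofReal_natCast]
    ring
  · rw [norm_mul, norm_mul, hexp, Complex.norm_I, Complex.norm_real, Real.norm_of_nonneg (by positivity)]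
    simp
  · refine Summable.of_norm ?_
    refine (aux_summable'' α r hα hr0 n).congr fun k => ?_
    rw [norm_mul, aux_exp, hexp, Complex.norm_real, Real.norm_of_nonneg (by positivity), mul_one]

theorem statement18 (α r : ℝ) (p : ℝ≥0∞)
    (hα : 0 < α) (hr0 : 0 < r) (hr1 : r < 1) (hp : 1 ≤ p) :
    ∀ t : ℝ, 0 < |t| → |t| ≤ π →
      (∀ n : ℕ, ‖Pn α r n t‖ ≤ π / |t| * Real.exp (-α * (n : ℝ) ^ r)) ∧
      (∀ n : ℕ, n₂ α r p ≤ n →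
        ‖deriv (Pn α r n) t‖ ≤
          28 * π / (13 * |t|) * Real.exp (-α * (n : ℝ) ^ r) * (n : ℝ) ^ (1 - r) / (α * r)) := by
  intro t h0 ht
  have hexp : ∀ (k : ℕ) (y : ℝ), ‖Complex.exp (Complex.I * y) ^ k‖ = 1 := fun k y => by
    rw [norm_pow, mul_comm, Complex.norm_exp_ofReal_mul_I, one_pow]
  have hanti : ∀ n k : ℕ, Real.exp (-α * ((k + 1 + n : ℕ) : ℝ) ^ r) ≤
      Real.exp (-α * ((k + n : ℕ) : ℝ) ^ r) := fun n k =>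
    aux_anti α r hα hr0 (Nat.cast_nonneg _) (by exact_mod_cast by omega)
  refine ⟨fun n => ?_, fun n hn => ?_⟩
  · unfold Pn
    simp_rw [aux_exp]
    refine aux_bound (fun k : ℕ => Real.exp (-α * ((k + n : ℕ) : ℝ) ^ r)) t _ h0 ht
      (fun N => ?_) ?_
    · have hs : ∀ k ∈ Finset.range N, |Real.exp (-α * ((k + 1 + n : ℕ) : ℝ) ^ r) -
          Real.exp (-α * ((k + n : ℕ) : ℝ) ^ r)| = Real.exp (-α * ((k + n : ℕ) : ℝ) ^ r) -
          Real.exp (-α * ((k + 1 + n : ℕ) : ℝ) ^ r) := fun k _ => by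
        rw [abs_sub_comm, abs_of_nonneg (sub_nonneg.2 (hanti n k))]
      rw [Finset.sum_congr rfl hs,
        Finset.sum_range_sub' (fun k : ℕ => Real.exp (-α * ((k + n : ℕ) : ℝ) ^ r))]
      simp only [Real.abs_exp, zero_add]
      linarith
    · refine Summable.of_norm ((aux_summable'' α r hα hr0 n).congr fun k => ?_)
      rw [norm_mul, hexp, Complex.norm_real, Real.norm_of_nonneg (by positivity), mul_one]
  · obtain ⟨hn0, hc⟩ := aux_cond α r p hα hr0 hr1 n hn
    rw [(aux_deriv α r hα hr0 n t).deriv, tsum_mul_left, norm_mul, Complex.norm_I, one_mul]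
    set F := Real.exp (-α * (n : ℝ) ^ r) * (n : ℝ) ^ (1 - r) / (α * r) with hF
    have hF0 : 0 ≤ F := by positivity
    have key : ‖∑' k : ℕ, (((k : ℝ) * Real.exp (-α * ((k + n : ℕ) : ℝ) ^ r) : ℝ) : ℂ) *
      Complex.exp (Complex.I * t) ^ k‖ ≤ π / |t| * (14 / 13 * F) := by
      refine aux_bound (fun k : ℕ => (k : ℝ) * Real.exp (-α * ((k + n : ℕ) : ℝ) ^ r)) t _ h0 ht
        (fun N => ?_) ?_
      · have hs : ∀ k ∈ Finset.range N,
            |((k + 1 : ℕ) : ℝ) * Real.exp (-α * ((k + 1 + n : ℕ) : ℝ) ^ r) -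
            (k : ℝ) * Real.exp (-α * ((k + n : ℕ) : ℝ) ^ r)| ≤
            2 * Real.exp (-α * ((k + 1 + n : ℕ) : ℝ) ^ r) -
            (((k + 1 : ℕ) : ℝ) * Real.exp (-α * ((k + 1 + n : ℕ) : ℝ) ^ r) -
            (k : ℝ) * Real.exp (-α * ((k + n : ℕ) : ℝ) ^ r)) := fun k _ => by
          have h1 := hanti n k
          have h2 := Real.exp_pos (-α * ((k + 1 + n : ℕ) : ℝ) ^ r)
          have h3 : (0:ℝ) ≤ k := Nat.cast_nonneg k
          have h4 := mul_le_mul_of_nonneg_left h1 h3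
          rw [Nat.cast_succ k, abs_le]
          constructor <;> linarith
        have h5 := Finset.sum_le_sum hs
        rw [Finset.sum_sub_distrib, ← Finset.mul_sum,
          Finset.sum_range_sub (fun k : ℕ => (k : ℝ) * Real.exp (-α * ((k + n : ℕ) : ℝ) ^ r))] at h5
        have h6 := aux_sum α r hα hr0 hr1 n hn0 hc N
        have h7 : 0 ≤ Real.exp (-α * ((N + n : ℕ) : ℝ) ^ r) *
          ((N + n : ℕ) : ℝ) ^ (1 - r) / (α * r) := by positivity
        rw [abs_of_nonneg (by positivity : 0 ≤ (N : ℝ) * Real.exp (-α * ((N + n : ℕ) : ℝ) ^ r))]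
        simp only [Nat.cast_zero, zero_mul, abs_zero] at h5 ⊢
        linarith
      · refine Summable.of_norm ((aux_summable' α r hα hr0 n).congr fun k => ?_)
        rw [norm_mul, hexp, Complex.norm_real, Real.norm_of_nonneg (by positivity), mul_one]
    refine key.trans ?_
    have e : 28 * π / (13 * |t|) * Real.exp (-α * (n : ℝ) ^ r) * (n : ℝ) ^ (1 - r) / (α * r)
        = π / |t| * (28 / 13 * F) := by
      rw [hF]; field_simp
    rw [e]
    have : 0 ≤ π / |t| := by positivity
    gcongr
    norm_num
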